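/- Every language L in PCCFL ∪ shuffleCFL satisfies the shuffle-pumping condition; that is, there exists a constant N such that for every word w ∈ L with |w| > N there exist words x, y, z, s, t such that (1) w ∈ x·((s·(y || t)) || z), (2) 1 ≤ |s| and |s·y·t| ≤ N, and (3) x·s^m·y·t^m·z ∈ L for all m ≥ 0. -/

import Mathlib

/-- `IsInterleaving w v u` means `u` is an interleaving of `w` and `v`. -/
inductive IsInterleaving {α : Type} : List α → List α → List α → Prop
  | nil : IsInterleaving [] [] []
  | left {a : α} {w v u : List α} : IsInterleaving w v u → IsInterleaving (a :: w) v (a :: u)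
  | right {a : α} {w v u : List α} : IsInterleaving w v u → IsInterleaving w (a :: v) (a :: u)

/-- Shuffle of two languages. -/
def shuffleLang {α : Type} (L K : Set (List α)) : Set (List α) :=
  {u | ∃ w ∈ L, ∃ v ∈ K, IsInterleaving w v u}

/-- A partially-commutative context-free grammar in Greibach form. -/
structure PCGrammar (α : Type) : Type 1 where
  V : Type
  finV : Finite V
  start : V
  prods : Set (V × α × List V)
  finP : prods.Finite
  indep : V → V → Prop
  indep_symm : ∀ {X Y : V}, indep X Y → indep Y X
  indep_irrefl : ∀ X : V, ¬ indep X X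

/-- `PCDerives G γ w` : configuration `γ` derives the empty configuration producing word `w`,
using production steps (at the head) and swap steps of independent adjacent nonterminals. -/
inductive PCDerives {α : Type} (G : PCGrammar α) : List G.V → List α → Prop
  | nil : PCDerives G [] []
  | prod {X : G.V} {a : α} {γ β : List G.V} {w : List α} :
      (X, a, γ) ∈ G.prods → PCDerives G (γ ++ β) w → PCDerives G (X :: β) (a :: w)
  | swap {η β : List G.V} {X Y : G.V} {w : List α} :
      G.indep X Y → PCDerives G (η ++ Y :: X :: β) w → PCDerives G (η ++ X :: Y :: β) w

/-- The language generated by a PC-grammar. -/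
def PCGrammar.lang {α : Type} (G : PCGrammar α) : Set (List α) :=
  {w | PCDerives G [G.start] w}

/-- The class of partially-commutative context-free languages. -/
def IsPCCFL {α : Type} (L : Set (List α)) : Prop :=
  ∃ G : PCGrammar α, G.lang = L

/-- The dependence relation (complement of independence) is transitive. -/
def PCGrammar.depTransitive {α : Type} (G : PCGrammar α) : Prop :=
  ∀ X Y Z : G.V, ¬ G.indep X Y → ¬ G.indep Y Z → ¬ G.indep X Z

/-- The subclass of PCCFL given by grammars with transitive dependence. -/
def IsTrPCCFL {α : Type} (L : Set (List α)) : Prop :=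
  ∃ G : PCGrammar α, G.depTransitive ∧ G.lang = L

/-- Terms of a PA-grammar (shuffle context-free grammar). -/
inductive PATerm (V : Type) : Type
  | eps : PATerm V
  | var (X : V) : PATerm V
  | seq (t u : PATerm V) : PATerm V
  | par (t u : PATerm V) : PATerm V

/-- Structural equivalence of PA-terms: associativity of both compositions,
commutativity of parallel composition, and neutrality of the empty term. -/
inductive PAEq {V : Type} : PATerm V → PATerm V → Prop
  | refl (t : PATerm V) : PAEq t t
  | symm {t u : PATerm V} : PAEq t u → PAEq u t
  | trans {t u v : PATerm V} : PAEq t u → PAEq u v → PAEq t v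
  | seq_assoc (t u v : PATerm V) : PAEq ((t.seq u).seq v) (t.seq (u.seq v))
  | par_assoc (t u v : PATerm V) : PAEq ((t.par u).par v) (t.par (u.par v))
  | par_comm (t u : PATerm V) : PAEq (t.par u) (u.par t)
  | seq_eps_left (t : PATerm V) : PAEq (PATerm.eps.seq t) t
  | seq_eps_right (t : PATerm V) : PAEq (t.seq PATerm.eps) t
  | par_eps (t : PATerm V) : PAEq (t.par PATerm.eps) t
  | seq_congr {t t' u u' : PATerm V} : PAEq t t' → PAEq u u' → PAEq (t.seq u) (t'.seq u')
  | par_congr {t t' u u' : PATerm V} : PAEq t t' → PAEq u u' → PAEq (t.par u) (t'.par u')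

/-- Single steps of a PA-grammar with production set `P`. -/
inductive PAStep {V α : Type} (P : Set (V × α × PATerm V)) : PATerm V → α → PATerm V → Prop
  | prod {X : V} {a : α} {t : PATerm V} : (X, a, t) ∈ P → PAStep P (PATerm.var X) a t
  | seq_left {t t' u : PATerm V} {a : α} : PAStep P t a t' → PAStep P (t.seq u) a (t'.seq u)
  | par_left {t t' u : PATerm V} {a : α} : PAStep P t a t' → PAStep P (t.par u) a (t'.par u)
  | par_right {t u u' : PATerm V} {a : α} : PAStep P u a u' → PAStep P (t.par u) a (t.par u')

/-- `PAGen P t w` : term `t` derives the empty term producing word `w`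
(terms are considered up to structural equivalence). -/
inductive PAGen {V α : Type} (P : Set (V × α × PATerm V)) : PATerm V → List α → Prop
  | done : PAGen P PATerm.eps []
  | eqv {t t' : PATerm V} {w : List α} : PAEq t t' → PAGen P t' w → PAGen P t w
  | step {t t' : PATerm V} {a : α} {w : List α} :
      PAStep P t a t' → PAGen P t' w → PAGen P t (a :: w)

/-- A PA-grammar (shuffle context-free grammar). -/
structure PAGrammar (α : Type) : Type 1 where
  V : Type
  finV : Finite V
  start : V
  prods : Set (V × α × PATerm V)
  finP : prods.Finite

/-- The language generated by a PA-grammar. -/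
def PAGrammar.lang {α : Type} (G : PAGrammar α) : Set (List α) :=
  {w | PAGen G.prods (PATerm.var G.start) w}

/-- The class of languages of PA-grammars (context-free grammars with shuffle). -/
def IsShuffleCFL {α : Type} (L : Set (List α)) : Prop :=
  ∃ G : PAGrammar α, G.lang = L

/-- A single swap of two adjacent letters independent according to `J`. -/
inductive AdjSwap {α : Type} (J : α → α → Prop) : List α → List α → Prop
  | swap (x y : List α) {a b : α} : J a b → AdjSwap J (x ++ a :: b :: y) (x ++ b :: a :: y)

/-- Trace equivalence: finitely many swaps of adjacent independent letters. -/
def TraceEquiv {α : Type} (J : α → α → Prop) : List α → List α → Prop :=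
  Relation.ReflTransGen (AdjSwap J)

/-- Trace closure of a language with respect to letter-independence `J`. -/
def traceClosure {α : Type} (J : α → α → Prop) (L : Set (List α)) : Set (List α) :=
  {w | ∃ v ∈ L, TraceEquiv J v w}

/-- The class of trace closures of context-free languages. -/
def IsTraceCFL {α : Type} (L : Set (List α)) : Prop :=
  ∃ J : α → α → Prop, (∀ a b, J a b → J b a) ∧ (∀ a, ¬ J a a) ∧
    ∃ L₀ : Language α, L₀.IsContextFree ∧ traceClosure J L₀ = L

/-- `listPow s m` is the word `s^m`. -/
def listPow {α : Type} (s : List α) (m : ℕ) : List α :=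
  (List.replicate m s).flatten

/-- The shuffle-pumping condition. -/
def ShufflePumping {α : Type} (L : Set (List α)) : Prop :=
  ∃ N : ℕ, ∀ w ∈ L, w.length > N →
    ∃ x y z s t : List α,
      (∃ yt u : List α, IsInterleaving y t yt ∧ IsInterleaving (s ++ yt) z u ∧ w = x ++ u) ∧
      1 ≤ s.length ∧ (s ++ y ++ t).length ≤ N ∧
      ∀ m : ℕ, x ++ listPow s m ++ y ++ listPow t m ++ z ∈ L

/-- The concatenation-pumping condition. -/
def ConcatPumping {α : Type} (L : Set (List α)) : Prop :=
  ∃ N : ℕ, ∀ w ∈ L, w.length > N →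
    ∃ x y z s t : List α,
      w = x ++ y ++ z ∧
      1 ≤ (s ++ t).length ∧ (s ++ t).length ≤ N ∧
      ∀ m : ℕ, x ++ listPow s m ++ y ++ listPow t m ++ z ∈ L

inductive Tr (V : Type) : Type
  | node : V → List (Tr V) → Tr V

namespace Tr
variable {V : Type}

def lab : Tr V → V
  | node X _ => X

def kids : Tr V → List (Tr V)
  | node _ cs => cs

mutual
def size : Tr V → ℕ
  | node _ cs => 1 + sizeL cs
def sizeL : List (Tr V) → ℕ
  | [] => 0
  | c :: cs => size c + sizeL cs
end

theorem size_eq (T : Tr V) : T.size = 1 + sizeL T.kids := by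
  cases T; simp [size, kids]

theorem sizeL_append (a b : List (Tr V)) : sizeL (a ++ b) = sizeL a + sizeL b := by
  induction a with
  | nil => simp [sizeL]
  | cons c cs ih => simp [sizeL, ih]; omega

theorem size_le_of_mem {c : Tr V} {cs : List (Tr V)} (h : c ∈ cs) : c.size ≤ sizeL cs := by
  induction cs with
  | nil => simp at h
  | cons d ds ih =>
    simp only [List.mem_cons] at h
    rcases h with rfl | h
    · simp [sizeL]
    · have := ih h
      simp [sizeL]; omega

theorem sizeL_le {cs : List (Tr V)} {b : ℕ} (h : ∀ c ∈ cs, c.size ≤ b) :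
    sizeL cs ≤ cs.length * b := by
  induction cs with
  | nil => simp [sizeL]
  | cons d ds ih =>
    have h1 := h d (by simp)
    have h2 := ih (fun c hc => h c (by simp [hc]))
    simp only [sizeL, List.length_cons, Nat.add_mul]; omega

theorem sizeL_perm {a b : List (Tr V)} (h : a.Perm b) : sizeL a = sizeL b := by
  induction h with
  | nil => rfl
  | cons x _ ih => simp [sizeL, ih]
  | swap x y l => simp [sizeL]; omega
  | trans _ _ ih1 ih2 => omega

inductive Sub : Tr V → Tr V → Prop
  | refl (T : Tr V) : Sub T T
  | kid {U c T : Tr V} : c ∈ T.kids → Sub U c → Sub U T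

theorem Sub.trans {A B C : Tr V} (h1 : Sub A B) (h2 : Sub B C) : Sub A C := by
  induction h2 with
  | refl => exact h1
  | kid hc _ ih => exact Sub.kid hc ih

theorem Sub.size_le {A B : Tr V} (h : Sub A B) : A.size ≤ B.size := by
  induction h with
  | refl => exact le_rfl
  | kid hc _ ih =>
    have := size_le_of_mem hc
    rw [size_eq (T := _)] at *
    grind [size_eq]

def Rep (T : Tr V) : Prop :=
  ∃ U U' c : Tr V, Sub U T ∧ c ∈ U.kids ∧ Sub U' c ∧ U'.lab = U.lab

def bnd (K : ℕ) : ℕ → ℕ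
  | 0 => 0
  | n + 1 => 1 + K * bnd K n

theorem bnd_le (K n : ℕ) : bnd K n ≤ bnd K (n + 1) := by
  induction n with
  | zero => simp [bnd]
  | succ n ih => 
    have := Nat.mul_le_mul_left K ih
    simp only [bnd] at *; omega

theorem size_le_bnd [DecidableEq V] (K : ℕ) (n : ℕ) : ∀ (A : Finset V) (T : Tr V), A.card ≤ n →
    (∀ U, Sub U T → U.lab ∈ A) → (∀ U, Sub U T → U.kids.length ≤ K) → ¬ Rep T →
    T.size ≤ bnd K n := by
  induction n with
  | zero =>
    intro A T hA hl _ _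
    have := hl T (Sub.refl T)
    simp at hA
    simp [hA] at this
  | succ n ih =>
    intro A T hA hl hK hR
    have hT := hl T (Sub.refl T)
    have key : ∀ c ∈ T.kids, c.size ≤ bnd K n := by
      intro c hc
      apply ih (A.erase T.lab) c
      · rw [Finset.card_erase_of_mem hT]; omega
      · intro U hU
        rw [Finset.mem_erase]
        refine ⟨fun h => hR ⟨T, U, c, Sub.refl T, hc, hU, h⟩, hl U (Sub.kid hc hU)⟩
      · exact fun U hU => hK U (Sub.kid hc hU)
      · rintro ⟨U, U', d, h1, h2⟩
        exact hR ⟨U, U', d, Sub.kid hc h1, h2⟩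
    have h1 := sizeL_le key
    have h2 := Nat.mul_le_mul_right (bnd K n) (hK T (Sub.refl T))
    rw [size_eq]; simp only [bnd]; omega

theorem exists_rep [Fintype V] [DecidableEq V] (K : ℕ) : ∀ (s : ℕ) (T : Tr V), T.size = s →
    (∀ U, Sub U T → U.kids.length ≤ K) → bnd K (Fintype.card V) < T.size →
    ∃ U U' c : Tr V, Sub U T ∧ c ∈ U.kids ∧ Sub U' c ∧ U'.lab = U.lab ∧
      U.size ≤ bnd K (Fintype.card V + 1) := by
  intro s
  induction s using Nat.strong_induction_on with
  | _ s ih =>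
    intro T hs hK hT
    by_cases h : ∃ c ∈ T.kids, bnd K (Fintype.card V) < c.size
    · obtain ⟨c, hc, hcs⟩ := h
      have h1 := size_le_of_mem hc
      have h2 := size_eq T
      obtain ⟨U, U', d, h3, h4⟩ := ih c.size (by omega) c rfl
        (fun U hU => hK U (Sub.kid hc hU)) hcs
      exact ⟨U, U', d, Sub.kid hc h3, h4⟩
    · push Not at h
      have hsz : T.size ≤ bnd K (Fintype.card V + 1) := by
        have h1 := sizeL_le h
        have h2 := Nat.mul_le_mul_right (bnd K (Fintype.card V)) (hK T (Sub.refl T))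
        rw [size_eq]; simp only [bnd]; omega
      by_cases hR : Rep T
      · obtain ⟨U, U', c, h1, h2, h3, h4⟩ := hR
        exact ⟨U, U', c, h1, h2, h3, h4, h1.size_le.trans hsz⟩
      · have := size_le_bnd K (Fintype.card V) Finset.univ T (by simp) (by simp) hK hR
        omega

end Tr

namespace IsInterleaving
variable {α : Type}

theorem length {a b c : List α} (h : IsInterleaving a b c) : c.length = a.length + b.length := by
  induction h with
  | nil => rfl
  | left _ ih => simp [ih]; omega
  | right _ ih => simp [ih]; omega

theorem comm {a b c : List α} (h : IsInterleaving a b c) : IsInterleaving b a c := by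
  induction h with
  | nil => exact nil
  | left _ ih => exact right ih
  | right _ ih => exact left ih

theorem self_nil (a : List α) : IsInterleaving a [] a := by
  induction a with
  | nil => exact nil
  | cons _ _ ih => exact left ih

theorem nil_self (a : List α) : IsInterleaving [] a a := (self_nil a).comm

theorem eq_of_nil {a c : List α} (h : IsInterleaving a [] c) : c = a := by
  generalize hb : ([] : List α) = b at h
  induction h with
  | nil => rfl
  | left _ ih => rw [ih hb]
  | right _ _ => simp at hb

theorem append {a b c a' b' c' : List α} (h : IsInterleaving a b c) (h' : IsInterleaving a' b' c') :
    IsInterleaving (a ++ a') (b ++ b') (c ++ c') := by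
  induction h with
  | nil => exact h'
  | left _ ih => exact left ih
  | right _ ih => exact right ih

theorem prefix_left (p : List α) {a b c : List α} (h : IsInterleaving a b c) :
    IsInterleaving (p ++ a) b (p ++ c) := (self_nil p).append h

theorem split {c d : List α} : ∀ {a b : List α}, IsInterleaving a b (c ++ d) →
    ∃ a1 a2 b1 b2, a = a1 ++ a2 ∧ b = b1 ++ b2 ∧ IsInterleaving a1 b1 c ∧
      IsInterleaving a2 b2 d := by
  induction c with
  | nil => intro a b h; exact ⟨[], a, [], b, rfl, rfl, nil, h⟩
  | cons x c ih =>
    intro a b h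
    rw [List.cons_append] at h
    cases h with
    | left h =>
      obtain ⟨a1, a2, b1, b2, rfl, rfl, h1, h2⟩ := ih h
      exact ⟨x :: a1, a2, b1, b2, rfl, rfl, left h1, h2⟩
    | right h =>
      obtain ⟨a1, a2, b1, b2, rfl, rfl, h1, h2⟩ := ih h
      exact ⟨a1, a2, x :: b1, b2, rfl, rfl, right h1, h2⟩

theorem assoc {ab c abc : List α} (h : IsInterleaving ab c abc) : ∀ {a b : List α},
    IsInterleaving a b ab → ∃ bc, IsInterleaving b c bc ∧ IsInterleaving a bc abc := by
  induction h with
  | nil => intro a b h; cases h; exact ⟨[], nil, nil⟩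
  | left _ ih =>
    intro a b h
    cases h with
    | left h => obtain ⟨bc, h1, h2⟩ := ih h; exact ⟨bc, h1, left h2⟩
    | right h => obtain ⟨bc, h1, h2⟩ := ih h; exact ⟨_, left h1, right h2⟩
  | right _ ih =>
    intro a b h
    obtain ⟨bc, h1, h2⟩ := ih h
    exact ⟨_, right h1, right h2⟩

theorem assoc_symm {a bc abc b c : List α} (h : IsInterleaving a bc abc)
    (h' : IsInterleaving b c bc) : ∃ ab, IsInterleaving a b ab ∧ IsInterleaving ab c abc := by
  obtain ⟨x, h1, h2⟩ := h.comm.assoc h'.comm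
  exact ⟨x, h1.comm, h2.comm⟩

end IsInterleaving

theorem listPow_succ {α : Type} (s : List α) (m : ℕ) : listPow s (m + 1) = s ++ listPow s m := by
  simp [listPow, List.replicate_succ]

theorem listPow_succ' {α : Type} (s : List α) (m : ℕ) : listPow s (m + 1) = listPow s m ++ s := by
  simp [listPow, List.replicate_succ']

theorem pump_core {α V : Type} [Finite V] (S : V) (D : V → List α → Prop)
    (G : Tr V → List α → Prop) (K : ℕ)
    (hlift : ∀ w, D S w → ∃ T : Tr V, T.lab = S ∧ G T w)
    (hsize : ∀ T w, G T w → T.size = w.length)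
    (hD : ∀ T w, G T w → D T.lab w)
    (hsub : ∀ T w U, G T w → Tr.Sub U T → U.kids.length ≤ K ∧ ∃ x u v z : List α,
      w = x ++ u ∧ IsInterleaving v z u ∧ G U v ∧ (x = [] → U = T) ∧
      ∀ v', D U.lab v' → D T.lab (x ++ v' ++ z)) :
    ShufflePumping {w | D S w} := by
  classical
  have := Fintype.ofFinite V
  refine ⟨Tr.bnd K (Fintype.card V + 1), ?_⟩
  intro w hw hlen
  obtain ⟨T, rfl, hG⟩ := hlift w hw
  have hb := Tr.bnd_le K (Fintype.card V)
  obtain ⟨U, U', c, hUT, hc, hU', hl, hsz⟩ := Tr.exists_rep K T.size T rfl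
    (fun U hU => (hsub T w U hG hU).1) (by rw [hsize T w hG]; omega)
  obtain ⟨-, x, u, v, z, rfl, hi, hGU, -, hctx⟩ := hsub T w U hG hUT
  obtain ⟨-, s, yt, y, t, rfl, hi', hGU', hne, hctx'⟩ := hsub U v U' hGU (Tr.Sub.kid hc hU')
  have hs : s ≠ [] := by
    intro h
    have h1 := hne h
    have h2 := hU'.size_le
    have h3 := Tr.size_le_of_mem hc
    have h4 := Tr.size_eq U
    rw [h1] at h2
    omega
  refine ⟨x, y, z, s, t, ⟨yt, u, hi', hi, rfl⟩, List.length_pos_iff.2 hs, ?_, ?_⟩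
  · have h1 := hsize _ _ hGU
    have h2 := hi'.length
    simp at h1 ⊢
    omega
  · intro m
    have key : D U.lab (listPow s m ++ y ++ listPow t m) := by
      induction m with
      | zero => simpa [listPow, ← hl] using hD _ _ hGU'
      | succ m ih =>
        have := hctx' _ (hl ▸ ih)
        rw [listPow_succ, listPow_succ']
        simpa using this
    have := hctx _ key
    simpa using this

/-! PC case -/

inductive TD {α : Type} (G : PCGrammar α) : List (Tr G.V) → List α → Prop
  | nil : TD G [] []
  | prod {T : Tr G.V} {a : α} {β : List (Tr G.V)} {w : List α} :
      (T.lab, a, T.kids.map Tr.lab) ∈ G.prods → TD G (T.kids ++ β) w → TD G (T :: β) (a :: w)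
  | swap {η β : List (Tr G.V)} {X Y : Tr G.V} {w : List α} :
      G.indep X.lab Y.lab → TD G (η ++ Y :: X :: β) w → TD G (η ++ X :: Y :: β) w

namespace TD
variable {α : Type} {G : PCGrammar α}

theorem forget {ts : List (Tr G.V)} {w : List α} (h : TD G ts w) :
    PCDerives G (ts.map Tr.lab) w := by
  induction h with
  | nil => exact PCDerives.nil
  | prod hp _ ih =>
    rw [List.map_append] at ih
    exact PCDerives.prod hp ih
  | swap hi _ ih =>
    rw [List.map_append] at ih ⊢
    exact PCDerives.swap hi ih

theorem lift {γ : List G.V} {w : List α} (h : PCDerives G γ w) :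
    ∃ ts : List (Tr G.V), ts.map Tr.lab = γ ∧ TD G ts w := by
  induction h with
  | nil => exact ⟨[], rfl, nil⟩
  | @prod X a γ β w hp _ ih =>
    obtain ⟨ts, h1, h2⟩ := ih
    obtain ⟨t1, t2, rfl, rfl, rfl⟩ := List.map_eq_append_iff.1 h1
    exact ⟨Tr.node X t1 :: t2, rfl, prod (T := Tr.node X t1) hp h2⟩
  | @swap η β X Y w hi _ ih =>
    obtain ⟨ts, h1, h2⟩ := ih
    obtain ⟨t1, t2, rfl, rfl, h3⟩ := List.map_eq_append_iff.1 h1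
    obtain ⟨y, t3, rfl, rfl, h4⟩ := List.map_eq_cons_iff.1 h3
    obtain ⟨x, t4, rfl, rfl, rfl⟩ := List.map_eq_cons_iff.1 h4
    exact ⟨t1 ++ x :: y :: t4, by simp, swap hi h2⟩

theorem length {ts : List (Tr G.V)} {w : List α} (h : TD G ts w) :
    Tr.sizeL ts = w.length := by
  induction h with
  | nil => rfl
  | prod _ _ ih =>
    rw [Tr.sizeL_append] at ih
    simp only [Tr.sizeL, Tr.size_eq, List.length_cons]; omega
  | swap _ _ ih =>
    rw [← ih]
    apply Tr.sizeL_perm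
    exact List.Perm.append_left _ (List.Perm.swap _ _ _)

theorem project {ts : List (Tr G.V)} {w : List α} (h : TD G ts w) :
    ∀ t1 t2, IsInterleaving t1 t2 ts →
      ∃ w1 w2, TD G t1 w1 ∧ TD G t2 w2 ∧ IsInterleaving w1 w2 w := by
  induction h with
  | nil => intro t1 t2 h; cases h; exact ⟨[], [], nil, nil, IsInterleaving.nil⟩
  | prod hp _ ih =>
    intro t1 t2 h
    cases h with
    | left h =>
      obtain ⟨w1, w2, h1, h2, h3⟩ := ih _ _ (h.prefix_left _)
      exact ⟨_, _, prod hp h1, h2, h3.left⟩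
    | right h =>
      obtain ⟨w1, w2, h1, h2, h3⟩ := ih _ _ (h.comm.prefix_left _).comm
      exact ⟨_, _, h1, prod hp h2, h3.right⟩
  | swap hi _ ih =>
    intro t1 t2 h
    obtain ⟨a1, a2, b1, b2, rfl, rfl, h1, h2⟩ := h.split
    cases h2 with
    | left h2 =>
      cases h2 with
      | left h2 =>
        obtain ⟨w1, w2, h3, h4, h5⟩ := ih _ _ (h1.append h2.left.left)
        exact ⟨_, _, swap hi h3, h4, h5⟩
      | right h2 => exact ih _ _ (h1.append h2.left.right)
    | right h2 =>
      cases h2 with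
      | left h2 => exact ih _ _ (h1.append h2.right.left)
      | right h2 =>
        obtain ⟨w1, w2, h3, h4, h5⟩ := ih _ _ (h1.append h2.right.right)
        exact ⟨_, _, h3, swap hi h4, h5⟩

theorem find {K : ℕ} (hK : ∀ p ∈ G.prods, p.2.2.length ≤ K) {U : Tr G.V}
    {ts : List (Tr G.V)} {w : List α} (h : TD G ts w) :
    ∀ T ∈ ts, Tr.Sub U T → U.kids.length ≤ K ∧ ∃ x w' β, w = x ++ w' ∧ TD G (U :: β) w' ∧
      (x = [] → U ∈ ts) ∧ ∀ v, PCDerives G (U.lab :: β.map Tr.lab) v →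
        PCDerives G (ts.map Tr.lab) (x ++ v) := by
  induction h with
  | nil => intro T hT; simp at hT
  | @prod T a β w hp hd ih =>
    intro L hL hU
    have aux : ∀ L ∈ T.kids ++ β, Tr.Sub U L → U.kids.length ≤ K ∧ ∃ x w' β', a :: w = x ++ w' ∧
        TD G (U :: β') w' ∧
        (x = [] → U ∈ T :: β) ∧ ∀ v, PCDerives G (U.lab :: β'.map Tr.lab) v →
        PCDerives G ((T :: β).map Tr.lab) (x ++ v) := by
      intro L hL hU
      obtain ⟨h1, x, w', β', rfl, h2, h3, h4⟩ := ih L hL hU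
      refine ⟨h1, a :: x, w', β', rfl, h2, by simp, fun v hv => ?_⟩
      have := h4 v hv
      rw [List.map_append] at this
      exact PCDerives.prod hp this
    simp only [List.mem_cons] at hL
    rcases hL with rfl | hL
    · cases hU with
      | refl =>
        exact ⟨by simpa using hK _ hp, [], _, β, rfl, prod hp hd, by simp, fun v hv => hv⟩
      | kid hc hU => exact aux _ (by simp [hc]) hU
    · exact aux L (by simp [hL]) hU
  | swap hi hd ih =>
    intro L hL hU
    obtain ⟨h1, x, w', β', rfl, h2, h3, h4⟩ := ih L (by simp at hL ⊢; tauto) hU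
    refine ⟨h1, x, w', β', rfl, h2, fun hx => ?_, fun v hv => ?_⟩
    · have := h3 hx
      simp at this ⊢; tauto
    · have := h4 v hv
      rw [List.map_append] at this ⊢
      exact PCDerives.swap hi this

end TD

theorem PCDerives.append {α : Type} {G : PCGrammar α} {γ δ : List G.V} {v z : List α}
    (h : PCDerives G γ v) (h' : PCDerives G δ z) : PCDerives G (γ ++ δ) (v ++ z) := by
  induction h with
  | nil => exact h'
  | prod hp _ ih => exact PCDerives.prod hp (by simpa using ih)
  | swap hi _ ih =>
    have := PCDerives.swap hi (by simpa using ih)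
    simpa using this

theorem pump_pc {α : Type} (G : PCGrammar α) : ShufflePumping G.lang := by
  have := G.finV
  obtain ⟨K, hK⟩ : ∃ K, ∀ p ∈ G.prods, p.2.2.length ≤ K := by
    obtain ⟨K, hK⟩ := (G.finP.image (fun p => p.2.2.length)).bddAbove
    exact ⟨K, fun p hp => hK ⟨p, hp, rfl⟩⟩
  refine pump_core G.start (fun X w => PCDerives G [X] w) (fun T w => TD G [T] w) K ?_ ?_ ?_ ?_
  · intro w hw
    obtain ⟨ts, h1, h2⟩ := TD.lift hw
    obtain ⟨T, l, rfl, h3, h4⟩ := List.map_eq_cons_iff.1 h1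
    rw [List.map_eq_nil_iff] at h4
    subst h4
    exact ⟨T, h3, h2⟩
  · intro T w h
    simpa [Tr.sizeL] using h.length
  · intro T w h
    exact h.forget
  · intro T w U h hU
    obtain ⟨h1, x, w', β, rfl, h2, h3, h4⟩ := TD.find hK h T (by simp) hU
    obtain ⟨v, z, h5, h6, h7⟩ := h2.project [U] β (IsInterleaving.nil_self β).left
    refine ⟨h1, x, w', v, z, rfl, h7, h5, fun hx => by simpa using h3 hx, fun v' hv' => ?_⟩
    rw [List.append_assoc]
    exact h4 _ (hv'.append h6.forget)

/-! PA case -/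

inductive Den {V α : Type} (P : Set (V × α × PATerm V)) : PATerm V → List α → Prop
  | eps : Den P PATerm.eps []
  | var {X : V} {a : α} {t : PATerm V} {w : List α} :
      (X, a, t) ∈ P → Den P t w → Den P (PATerm.var X) (a :: w)
  | seq {t u : PATerm V} {w v : List α} : Den P t w → Den P u v → Den P (t.seq u) (w ++ v)
  | par {t u : PATerm V} {w v x : List α} : Den P t w → Den P u v → IsInterleaving w v x →
      Den P (t.par u) x

namespace PATerm

def map {V W : Type} (f : V → W) : PATerm V → PATerm W
  | eps => eps
  | var X => var (f X)
  | seq t u => seq (map f t) (map f u)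
  | par t u => par (map f t) (map f u)

def leaves {V : Type} : PATerm V → List V
  | eps => []
  | var X => [X]
  | seq t u => leaves t ++ leaves u
  | par t u => leaves t ++ leaves u

theorem leaves_map {V W : Type} (f : V → W) (t : PATerm V) :
    (t.map f).leaves = t.leaves.map f := by
  induction t <;> simp [map, leaves, *]

end PATerm

theorem PAEq.map {V W : Type} (f : V → W) {t u : PATerm V} (h : PAEq t u) :
    PAEq (t.map f) (u.map f) := by
  induction h with
  | refl => exact PAEq.refl _
  | symm _ ih => exact ih.symm
  | trans _ _ ih1 ih2 => exact ih1.trans ih2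
  | seq_assoc => exact PAEq.seq_assoc _ _ _
  | par_assoc => exact PAEq.par_assoc _ _ _
  | par_comm => exact PAEq.par_comm _ _
  | seq_eps_left => exact PAEq.seq_eps_left _
  | seq_eps_right => exact PAEq.seq_eps_right _
  | par_eps => exact PAEq.par_eps _
  | seq_congr _ _ ih1 ih2 => exact PAEq.seq_congr ih1 ih2
  | par_congr _ _ ih1 ih2 => exact PAEq.par_congr ih1 ih2

theorem PAEq.leaves {V : Type} {t u : PATerm V} (h : PAEq t u) : t.leaves.Perm u.leaves := by
  induction h with
  | refl => exact List.Perm.refl _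
  | symm _ ih => exact ih.symm
  | trans _ _ ih1 ih2 => exact ih1.trans ih2
  | seq_assoc => simp [PATerm.leaves]
  | par_assoc => simp [PATerm.leaves]
  | par_comm => exact List.perm_append_comm
  | seq_eps_left => simp [PATerm.leaves]
  | seq_eps_right => simp [PATerm.leaves]
  | par_eps => simp [PATerm.leaves]
  | seq_congr _ _ ih1 ih2 => exact ih1.append ih2
  | par_congr _ _ ih1 ih2 => exact ih1.append ih2

section PA
variable {V α : Type} {P : Set (V × α × PATerm V)}

theorem PAEq.den {t u : PATerm V} (h : PAEq t u) : ∀ w, Den P t w ↔ Den P u w := by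
  induction h with
  | refl => exact fun w => Iff.rfl
  | symm _ ih => exact fun w => (ih w).symm
  | trans _ _ ih1 ih2 => exact fun w => (ih1 w).trans (ih2 w)
  | seq_assoc =>
    intro w
    constructor
    · rintro (_ | _ | ⟨_ | _ | ⟨h1, h2⟩, h3⟩)
      rw [List.append_assoc]
      exact h1.seq (h2.seq h3)
    · rintro (_ | _ | ⟨h1, _ | _ | ⟨h2, h3⟩⟩)
      rw [← List.append_assoc]
      exact (h1.seq h2).seq h3
  | par_assoc =>
    intro w
    constructor
    · rintro (_ | _ | _ | ⟨_ | _ | _ | ⟨h1, h2, i⟩, h3, j⟩)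
      obtain ⟨_, k, l⟩ := j.assoc i
      exact h1.par (h2.par h3 k) l
    · rintro (_ | _ | _ | ⟨h1, _ | _ | _ | ⟨h2, h3, i⟩, j⟩)
      obtain ⟨_, k, l⟩ := j.assoc_symm i
      exact (h1.par h2 k).par h3 l
  | par_comm =>
    intro w
    constructor
    · rintro (_ | _ | _ | ⟨h1, h2, i⟩)
      exact h2.par h1 i.comm
    · rintro (_ | _ | _ | ⟨h1, h2, i⟩)
      exact h2.par h1 i.comm
  | seq_eps_left =>
    intro w
    constructor
    · rintro (_ | _ | ⟨_ | _, h2⟩)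
      exact h2
    · intro h
      exact Den.eps.seq h
  | seq_eps_right =>
    intro w
    constructor
    · rintro (_ | _ | ⟨h1, _ | _⟩)
      simpa using h1
    · intro h
      simpa using h.seq Den.eps
  | par_eps =>
    intro w
    constructor
    · rintro (_ | _ | _ | ⟨h1, _ | _, i⟩)
      rw [i.eq_of_nil]; exact h1
    · intro h
      exact h.par Den.eps (IsInterleaving.self_nil _)
  | seq_congr _ _ ih1 ih2 =>
    intro w
    constructor
    · rintro (_ | _ | ⟨h1, h2⟩)
      exact ((ih1 _).1 h1).seq ((ih2 _).1 h2)
    · rintro (_ | _ | ⟨h1, h2⟩)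
      exact ((ih1 _).2 h1).seq ((ih2 _).2 h2)
  | par_congr _ _ ih1 ih2 =>
    intro w
    constructor
    · rintro (_ | _ | _ | ⟨h1, h2, i⟩)
      exact ((ih1 _).1 h1).par ((ih2 _).1 h2) i
    · rintro (_ | _ | _ | ⟨h1, h2, i⟩)
      exact ((ih1 _).2 h1).par ((ih2 _).2 h2) i

theorem PAStep.den {t t' : PATerm V} {a : α} (h : PAStep P t a t') : ∀ w, Den P t' w →
    Den P t (a :: w) := by
  induction h with
  | prod hp => exact fun w hw => Den.var hp hw
  | seq_left _ ih =>
    rintro w (_ | _ | ⟨h1, h2⟩)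
    exact (ih _ h1).seq h2
  | par_left _ ih =>
    rintro w (_ | _ | _ | ⟨h1, h2, i⟩)
    exact (ih _ h1).par h2 i.left
  | par_right _ ih =>
    rintro w (_ | _ | _ | ⟨h1, h2, i⟩)
    exact h1.par (ih _ h2) i.right

theorem PAGen.den {t : PATerm V} {w : List α} (h : PAGen P t w) : Den P t w := by
  induction h with
  | done => exact Den.eps
  | eqv he _ ih => exact (he.den _).2 ih
  | step hs _ ih => exact hs.den _ ih

theorem PAGen.seq {t u : PATerm V} {w v : List α} (h : PAGen P t w) (h' : PAGen P u v) :
    PAGen P (t.seq u) (w ++ v) := by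
  induction h with
  | done => exact PAGen.eqv (PAEq.seq_eps_left _) h'
  | eqv he _ ih => exact PAGen.eqv (PAEq.seq_congr he (PAEq.refl _)) ih
  | step hs _ ih => exact PAGen.step (PAStep.seq_left hs) ih

theorem PAGen.eps_par {u : PATerm V} {v : List α} (h' : PAGen P u v) :
    PAGen P (PATerm.eps.par u) v :=
  PAGen.eqv ((PAEq.par_comm _ _).trans (PAEq.par_eps _)) h'

theorem PAGen.par {t : PATerm V} {w : List α} (h : PAGen P t w) :
    ∀ {u : PATerm V} {v x : List α}, PAGen P u v → IsInterleaving w v x →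
    PAGen P (t.par u) x := by
  induction h with
  | done =>
    intro u v x h' i
    rw [i.comm.eq_of_nil]
    exact h'.eps_par
  | eqv he _ ih => 
    intro u v x h' i
    exact PAGen.eqv (PAEq.par_congr he (PAEq.refl _)) (ih h' i)
  | @step t t' a w hs h0 ih =>
    intro u v x h'
    induction h' generalizing x with
    | done =>
      intro i
      rw [i.eq_of_nil]
      exact PAGen.step (PAStep.par_left hs) (ih PAGen.done (IsInterleaving.self_nil _))
    | eqv he _ ih' =>
      intro i
      exact PAGen.eqv (PAEq.par_congr (PAEq.refl _) he) (ih' i)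
    | step hs' h'' ih' =>
      intro i
      cases i with
      | left i => exact PAGen.step (PAStep.par_left hs) (ih (PAGen.step hs' h'') i)
      | right i => exact PAGen.step (PAStep.par_right hs') (ih' i)

theorem Den.gen {t : PATerm V} {w : List α} (h : Den P t w) : PAGen P t w := by
  induction h with
  | eps => exact PAGen.done
  | var hp _ ih => exact PAGen.step (PAStep.prod hp) ih
  | seq _ _ ih1 ih2 => exact ih1.seq ih2
  | par _ _ i ih1 ih2 => exact ih1.par ih2 i

/-- Productions annotated with trees. -/
def treeProds (P : Set (V × α × PATerm V)) : Set (Tr V × α × PATerm (Tr V)) :=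
  {p | p.2.2.leaves = p.1.kids ∧ (p.1.lab, p.2.1, p.2.2.map Tr.lab) ∈ P}

theorem Den.lift {t : PATerm V} {w : List α} (h : Den P t w) :
    ∃ t' : PATerm (Tr V), t'.map Tr.lab = t ∧ Den (treeProds P) t' w := by
  induction h with
  | eps => exact ⟨PATerm.eps, rfl, Den.eps⟩
  | @var X a t w hp _ ih =>
    obtain ⟨t', rfl, h⟩ := ih
    exact ⟨PATerm.var (Tr.node X t'.leaves), rfl, Den.var (t := t') ⟨rfl, hp⟩ h⟩
  | seq _ _ ih1 ih2 =>
    obtain ⟨t1, rfl, h1⟩ := ih1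
    obtain ⟨t2, rfl, h2⟩ := ih2
    exact ⟨t1.seq t2, rfl, h1.seq h2⟩
  | par _ _ i ih1 ih2 =>
    obtain ⟨t1, rfl, h1⟩ := ih1
    obtain ⟨t2, rfl, h2⟩ := ih2
    exact ⟨t1.par t2, rfl, h1.par h2 i⟩

theorem Den.forget {t : PATerm (Tr V)} {w : List α} (h : Den (treeProds P) t w) :
    Den P (t.map Tr.lab) w := by
  induction h with
  | eps => exact Den.eps
  | var hp _ ih => exact Den.var hp.2 ih
  | seq _ _ ih1 ih2 => exact ih1.seq ih2
  | par _ _ i ih1 ih2 => exact ih1.par ih2 i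

theorem Den.length {t : PATerm (Tr V)} {w : List α} (h : Den (treeProds P) t w) :
    Tr.sizeL t.leaves = w.length := by
  induction h with
  | eps => rfl
  | @var X a t w hp _ ih =>
    have := hp.1
    simp only at this
    simp only [PATerm.leaves, Tr.sizeL, Tr.size_eq, ← this, List.length_cons]; omega
  | seq _ _ ih1 ih2 => simp [PATerm.leaves, Tr.sizeL_append, ih1, ih2]
  | par _ _ i ih1 ih2 => simp [PATerm.leaves, Tr.sizeL_append, ih1, ih2, i.length]

/-- Active one-hole contexts. -/
inductive ACtx (W : Type) : Type
  | hole : ACtx W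
  | seqL (C : ACtx W) (u : PATerm W) : ACtx W
  | parL (C : ACtx W) (u : PATerm W) : ACtx W
  | parR (u : PATerm W) (C : ACtx W) : ACtx W

def ACtx.plug {W : Type} : ACtx W → PATerm W → PATerm W
  | hole, t => t
  | seqL C u, t => (C.plug t).seq u
  | parL C u, t => (C.plug t).par u
  | parR u C, t => u.par (C.plug t)

theorem PAStep.exists_ctx {t t' : PATerm V} {a : α} (h : PAStep P t a t') :
    ∃ (C : ACtx V) (X : V) (r : PATerm V), t = C.plug (PATerm.var X) ∧ t' = C.plug r ∧
      (X, a, r) ∈ P := by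
  induction h with
  | prod hp => exact ⟨ACtx.hole, _, _, rfl, rfl, hp⟩
  | seq_left _ ih =>
    obtain ⟨C, X, r, rfl, rfl, h⟩ := ih
    exact ⟨ACtx.seqL C _, X, r, rfl, rfl, h⟩
  | par_left _ ih =>
    obtain ⟨C, X, r, rfl, rfl, h⟩ := ih
    exact ⟨ACtx.parL C _, X, r, rfl, rfl, h⟩
  | par_right _ ih =>
    obtain ⟨C, X, r, rfl, rfl, h⟩ := ih
    exact ⟨ACtx.parR _ C, X, r, rfl, rfl, h⟩

theorem PAStep.forget {t t' : PATerm (Tr V)} {a : α} (h : PAStep (treeProds P) t a t') :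
    PAStep P (t.map Tr.lab) a (t'.map Tr.lab) := by
  induction h with
  | prod hp => exact PAStep.prod hp.2
  | seq_left _ ih => exact PAStep.seq_left ih
  | par_left _ ih => exact PAStep.par_left ih
  | par_right _ ih => exact PAStep.par_right ih

theorem ACtx.mem_leaves {W : Type} (C : ACtx W) (t : PATerm W) (x : W) :
    x ∈ (C.plug t).leaves ↔ x ∈ t.leaves ∨ x ∈ (C.plug PATerm.eps).leaves := by
  induction C with
  | hole => simp [plug, PATerm.leaves]
  | seqL C u ih => simp [plug, PATerm.leaves, ih, or_assoc]
  | parL C u ih => simp [plug, PATerm.leaves, ih, or_assoc]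
  | parR u C ih => simp only [plug, PATerm.leaves, List.mem_append, ih]; tauto

theorem Den.project (C : ACtx V) (t : PATerm V) : ∀ w, Den P (C.plug t) w →
    ∃ v z, Den P t v ∧ Den P (C.plug PATerm.eps) z ∧ IsInterleaving v z w := by
  induction C with
  | hole => exact fun w h => ⟨w, [], h, Den.eps, IsInterleaving.self_nil _⟩
  | seqL C u ih =>
    rintro w (_ | _ | ⟨h1, h2⟩)
    obtain ⟨v, z, h3, h4, i⟩ := ih _ h1
    exact ⟨v, _, h3, h4.seq h2, by simpa using i.append (IsInterleaving.nil_self _)⟩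
  | parL C u ih =>
    rintro w (_ | _ | _ | ⟨h1, h2, j⟩)
    obtain ⟨v, z, h3, h4, i⟩ := ih _ h1
    obtain ⟨z', k, l⟩ := j.assoc i
    exact ⟨v, z', h3, h4.par h2 k, l⟩
  | parR u C ih =>
    rintro w (_ | _ | _ | ⟨h2, h1, j⟩)
    obtain ⟨v, z, h3, h4, i⟩ := ih _ h1
    obtain ⟨z', k, l⟩ := j.comm.assoc i
    exact ⟨v, z', h3, h2.par h4 k.comm, l⟩

theorem Den.unproject {W : Type} (f : W → V) (C : ACtx W) (t : PATerm W) (v : List α)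
    (hv : Den P (t.map f) v) :
    ∀ z, Den P ((C.plug PATerm.eps).map f) z → Den P ((C.plug t).map f) (v ++ z) := by
  induction C with
  | hole =>
    intro z hz
    cases hz
    simpa [ACtx.plug] using hv
  | seqL C u ih =>
    rintro w (_ | _ | ⟨h1, h2⟩)
    rw [← List.append_assoc]
    exact (ih _ h1).seq h2
  | parL C u ih =>
    rintro w (_ | _ | _ | ⟨h1, h2, j⟩)
    exact (ih _ h1).par h2 (j.prefix_left _)
  | parR u C ih =>
    rintro w (_ | _ | _ | ⟨h2, h1, j⟩)
    exact h2.par (ih _ h1) (j.comm.prefix_left _).comm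

theorem PAGen.find {K : ℕ} (hK : ∀ p ∈ P, p.2.2.leaves.length ≤ K) {U : Tr V}
    {t : PATerm (Tr V)} {w : List α} (h : PAGen (treeProds P) t w) :
    ∀ T ∈ t.leaves, Tr.Sub U T → U.kids.length ≤ K ∧ ∃ (x w' : List α) (C : ACtx (Tr V)),
      w = x ++ w' ∧ PAGen (treeProds P) (C.plug (PATerm.var U)) w' ∧
      (x = [] → U ∈ t.leaves) ∧ ∀ v, Den P ((C.plug (PATerm.var U)).map Tr.lab) v →
        Den P (t.map Tr.lab) (x ++ v) := by
  induction h with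
  | done => intro T hT; simp [PATerm.leaves] at hT
  | eqv he _ ih =>
    intro T hT hU
    obtain ⟨h1, x, w', C, rfl, h2, h3, h4⟩ := ih T (he.leaves.mem_iff.1 hT) hU
    exact ⟨h1, x, w', C, rfl, h2, fun hx => he.leaves.mem_iff.2 (h3 hx),
      fun v hv => ((he.map Tr.lab).den _).2 (h4 v hv)⟩
  | @step t t' a w hs hd ih =>
    intro L hL hU
    have aux : ∀ L ∈ t'.leaves, Tr.Sub U L → U.kids.length ≤ K ∧
        ∃ (x w' : List α) (C : ACtx (Tr V)),
        a :: w = x ++ w' ∧ PAGen (treeProds P) (C.plug (PATerm.var U)) w' ∧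
        (x = [] → U ∈ t.leaves) ∧ ∀ v, Den P ((C.plug (PATerm.var U)).map Tr.lab) v →
          Den P (t.map Tr.lab) (x ++ v) := by
      intro L hL hU
      obtain ⟨h1, x, w', C, rfl, h2, h3, h4⟩ := ih L hL hU
      exact ⟨h1, a :: x, w', C, rfl, h2, by simp, fun v hv => hs.forget.den _ (h4 v hv)⟩
    obtain ⟨C, Y, r, rfl, rfl, hp⟩ := hs.exists_ctx
    rw [ACtx.mem_leaves] at hL
    rcases hL with hL | hL
    · simp only [PATerm.leaves, List.mem_singleton] at hL
      subst hL
      cases hU with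
      | refl =>
        refine ⟨?_, [], a :: w, C, rfl, PAGen.step hs hd, fun _ => ?_, fun v hv => hv⟩
        · have h1 := hK _ hp.2
          have h2 := hp.1
          simp only [PATerm.leaves_map, List.length_map] at h1 h2
          rwa [h2] at h1
        · rw [ACtx.mem_leaves]; simp [PATerm.leaves]
      | kid hc hU =>
        refine aux _ ((ACtx.mem_leaves _ _ _).2 (Or.inl ?_)) hU
        have h2 := hp.1
        simp only at h2
        rwa [h2]
    · exact aux L ((ACtx.mem_leaves _ _ _).2 (Or.inr hL)) hU

end PA

theorem pump_pa {α : Type} (G : PAGrammar α) : ShufflePumping G.lang := by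
  have := G.finV
  obtain ⟨K, hK⟩ : ∃ K, ∀ p ∈ G.prods, p.2.2.leaves.length ≤ K := by
    obtain ⟨K, hK⟩ := (G.finP.image (fun p => p.2.2.leaves.length)).bddAbove
    exact ⟨K, fun p hp => hK ⟨p, hp, rfl⟩⟩
  have hlang : G.lang = {w | Den G.prods (PATerm.var G.start) w} := by
    ext w
    exact ⟨PAGen.den, Den.gen⟩
  rw [hlang]
  refine pump_core G.start (fun X w => Den G.prods (PATerm.var X) w)
    (fun T w => Den (treeProds G.prods) (PATerm.var T) w) K ?_ ?_ ?_ ?_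
  · intro w hw
    obtain ⟨t, h1, h2⟩ := hw.lift
    cases t with
    | var T =>
      simp only [PATerm.map, PATerm.var.injEq] at h1
      exact ⟨T, h1, h2⟩
    | _ => simp [PATerm.map] at h1
  · intro T w h
    simpa [Tr.sizeL, PATerm.leaves] using h.length
  · intro T w h
    exact h.forget
  · intro T w U h hU
    obtain ⟨h1, x, w', C, rfl, h2, h3, h4⟩ := PAGen.find hK h.gen T (by simp [PATerm.leaves]) hU
    obtain ⟨v, z, h5, h6, h7⟩ := Den.project _ _ _ h2.den
    refine ⟨h1, x, w', v, z, rfl, h7, h5, fun hx => by simpa [PATerm.leaves] using h3 hx,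
      fun v' hv' => ?_⟩
    rw [List.append_assoc]
    exact h4 _ (Den.unproject Tr.lab C (PATerm.var U) v' hv' z h6.forget)

/-- every language in PCCFL ∪ shuffleCFL satisfies shuffle pumping. -/
theorem shuffle_pumping_of_pccfl_or_shufflecfl (α : Type) [Finite α]
    (L : Set (List α)) (hL : IsPCCFL L ∨ IsShuffleCFL L) :
    ShufflePumping L := by
  rcases hL with ⟨G, rfl⟩ | ⟨G, rfl⟩
  · exact pump_pc G
  · exact pump_pa G
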